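/- arXiv:1804.01135 — 3 statements merged into one kernel-verified Lean document; each statement's English description precedes it below -/
import Mathlib

section
/- Let Ω ⊆ ℝ^d (d ≥ 1) be open, let D_x be C¹ on Ω, let σ_{x,a}, σ_{x,f} : Ω → ℝ, and let u₀ be C² on Ω with u₀ > 0, satisfying the diffusion equation -∇·(D_x∇u₀) + (σ_{x,a} + σ_{x,f})u₀ = 0 pointwise in Ω. Let γ_x, β_x, β_f ∈ ℝ with β_f ≠ 0 and β_f + γ_x ≠ 0, and define Q := γ_x D_x |∇u₀|² + (β_x σ_{x,a} + β_f σ_{x,f}) u₀², θ := (β_f - γ_x)/(β_f + γ_x), μ := β_x/β_f - 1, b := -(2/(1+θ)) σ_{x,a} μ, and c := (2/(1+θ)) Q/β_f. Then the function Ψ := u₀^{2/(1+θ)} satisfies ∇·(D_x∇Ψ) = bΨ + cΨ^{-θ} pointwise in Ω. -/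
/-!
For `p = 2 / (1 + θ) = 1 + γx / βf`, the chain rule gives
`∇·(D∇(u ^ p)) = p u ^ (p - 1) ∇·(D∇u) + p (p - 1) u ^ (p - 2) D |∇u|²`. Once the diffusion equation
is inserted, the right-hand side is `p u ^ (p - 2)` times
`(σa + σf) u² + (γx / βf) D |∇u|² = Q / βf - μ σa u²`: for this exponent the gradient term is
exactly that of the internal data `Q / βf`. Moreover `u ^ (p - 2) = (u ^ p) ^ (-θ)`.
-/

open Real Set MeasureTheory Filter Topology

/-- Divergence-form operator `∇·(a∇u)(x) = ∑ i ∂_i (a ∂_i u)(x)`. -/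
noncomputable def divA {d : ℕ} (a u : EuclideanSpace ℝ (Fin d) → ℝ)
    (x : EuclideanSpace ℝ (Fin d)) : ℝ :=
  ∑ i : Fin d,
    fderiv ℝ (fun y => a y * fderiv ℝ u y (EuclideanSpace.single i (1 : ℝ))) x
      (EuclideanSpace.single i (1 : ℝ))

/-- Squared Euclidean norm of the gradient `|∇u|²(x)`. -/
noncomputable def gradSq {d : ℕ} (u : EuclideanSpace ℝ (Fin d) → ℝ)
    (x : EuclideanSpace ℝ (Fin d)) : ℝ :=
  ∑ i : Fin d, (fderiv ℝ u x (EuclideanSpace.single i (1 : ℝ))) ^ 2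

lemma differentiableAt_fderiv_of_contDiffAt_two {𝕜 E F : Type*} [NontriviallyNormedField 𝕜]
    [NormedAddCommGroup E] [NormedSpace 𝕜 E] [NormedAddCommGroup F] [NormedSpace 𝕜 F]
    {f : E → F} {x : E} (hf : ContDiffAt 𝕜 2 f x) : DifferentiableAt 𝕜 (fderiv 𝕜 f) x :=
  (hf.fderiv_right (m := 1) one_add_one_eq_two.le).differentiableAt one_ne_zero

section Divergence

variable {d : ℕ} {a u : EuclideanSpace ℝ (Fin d) → ℝ} {x : EuclideanSpace ℝ (Fin d)}

/-- The `i`-th component `a ∂_i u` of the flux `a∇u`, the vector field whose divergence is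
`divA a u`. -/
noncomputable def flux (a u : EuclideanSpace ℝ (Fin d) → ℝ) (i : Fin d)
    (x : EuclideanSpace ℝ (Fin d)) : ℝ :=
  a x * fderiv ℝ u x (EuclideanSpace.single i (1 : ℝ))

lemma differentiableAt_flux (ha : DifferentiableAt ℝ a x)
    (hu : DifferentiableAt ℝ (fderiv ℝ u) x) (i : Fin d) :
    DifferentiableAt ℝ (flux a u i) x :=
  ha.mul (hu.clm_apply (differentiableAt_const _))

lemma flux_comp {φ : ℝ → ℝ} {φ' : ℝ} (hu : DifferentiableAt ℝ u x)
    (hφ : HasDerivAt φ φ' (u x)) (i : Fin d) :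
    flux a (fun y => φ (u y)) i x = φ' * flux a u i x := by
  have hchain : fderiv ℝ (fun y => φ (u y)) x = φ' • fderiv ℝ u x :=
    (hφ.comp_hasFDerivAt x hu.hasFDerivAt).fderiv
  simp only [flux, hchain, smul_apply, smul_eq_mul]
  ring

lemma divA_comp {φ φ' : ℝ → ℝ} {φ'' : ℝ} (hu : ∀ᶠ y in 𝓝 x, DifferentiableAt ℝ u y)
    (hflux : ∀ i, DifferentiableAt ℝ (flux a u i) x)
    (hφ : ∀ᶠ t in 𝓝 (u x), HasDerivAt φ (φ' t) t) (hφ' : HasDerivAt φ' φ'' (u x)) :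
    divA a (fun y => φ (u y)) x = φ' (u x) * divA a u x + φ'' * a x * gradSq u x := by
  have hux : DifferentiableAt ℝ u x := hu.self_of_nhds
  have hφ'u : HasFDerivAt (fun y => φ' (u y)) (φ'' • fderiv ℝ u x) x :=
    hφ'.comp_hasFDerivAt x hux.hasFDerivAt
  have hflux_comp (i : Fin d) :
      flux a (fun y => φ (u y)) i =ᶠ[𝓝 x] fun y => φ' (u y) * flux a u i y := by
    filter_upwards [hu, hux.continuousAt.eventually hφ] with y huy hφy
    exact flux_comp huy hφy i
  have hcoord (i : Fin d) :
      fderiv ℝ (flux a (fun y => φ (u y)) i) x (EuclideanSpace.single i 1) =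
        φ' (u x) * fderiv ℝ (flux a u i) x (EuclideanSpace.single i 1) +
          φ'' * a x * fderiv ℝ u x (EuclideanSpace.single i 1) ^ 2 := by
    rw [(hflux_comp i).fderiv_eq, (hφ'u.fun_mul (hflux i).hasFDerivAt).fderiv]
    simp only [add_apply, smul_apply, smul_eq_mul, flux]
    ring
  calc divA a (fun y => φ (u y)) x
      = ∑ i, (φ' (u x) * fderiv ℝ (flux a u i) x (EuclideanSpace.single i 1) +
          φ'' * a x * fderiv ℝ u x (EuclideanSpace.single i 1) ^ 2) :=
        Finset.sum_congr rfl fun i _ => hcoord i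
    _ = φ' (u x) * divA a u x + φ'' * a x * gradSq u x := by
        rw [Finset.sum_add_distrib, ← Finset.mul_sum, ← Finset.mul_sum]
        rfl

lemma divA_rpow (hu : ∀ᶠ y in 𝓝 x, DifferentiableAt ℝ u y)
    (hflux : ∀ i, DifferentiableAt ℝ (flux a u i) x) (hx : u x ≠ 0) (p : ℝ) :
    divA a (fun y => u y ^ p) x =
      p * u x ^ (p - 1) * divA a u x + p * (p - 1) * u x ^ (p - 2) * a x * gradSq u x := by
  have hpow : ∀ᶠ t in 𝓝 (u x), HasDerivAt (fun s => s ^ p) (p * t ^ (p - 1)) t := by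
    filter_upwards [eventually_ne_nhds hx] with t ht
    exact Real.hasDerivAt_rpow_const (Or.inl ht)
  have hpow' : HasDerivAt (fun t => p * t ^ (p - 1)) (p * (p - 1) * u x ^ (p - 2)) (u x) := by
    rw [mul_assoc, show p - 2 = p - 1 - 1 by ring]
    exact (Real.hasDerivAt_rpow_const (Or.inl hx)).const_mul p
  exact divA_comp hu hflux hpow hpow'

lemma divA_rpow_of_divA_eq_mul {s : ℝ} (hu : ∀ᶠ y in 𝓝 x, DifferentiableAt ℝ u y)
    (hflux : ∀ i, DifferentiableAt ℝ (flux a u i) x) (hx : u x ≠ 0)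
    (hs : divA a u x = s * u x) (p : ℝ) :
    divA a (fun y => u y ^ p) x =
      p * u x ^ (p - 2) * (s * u x ^ 2 + (p - 1) * a x * gradSq u x) := by
  have hpow : u x ^ (p - 1) = u x ^ (p - 2) * u x := by
    rw [← Real.rpow_add_one hx]
    ring_nf
  rw [divA_rpow hu hflux hx, hs, hpow]
  ring

end Divergence

section Exponent

variable {K : Type*} [Field K]

lemma one_add_sub_div_add {β γ : K} (hsum : β + γ ≠ 0) :
    1 + (β - γ) / (β + γ) = 2 * β / (β + γ) := by
  field_simp
  ring

lemma two_div_one_add_sub_div_add [NeZero (2 : K)] {β γ : K} (hβ : β ≠ 0) (hsum : β + γ ≠ 0) :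
    2 / (1 + (β - γ) / (β + γ)) = 1 + γ / β := by
  have htwo : (2 : K) ≠ 0 := two_ne_zero
  rw [one_add_sub_div_add hsum]
  field_simp

lemma two_div_one_add_mul_neg {θ : K} (hθ : 1 + θ ≠ 0) :
    2 / (1 + θ) * -θ = 2 / (1 + θ) - 2 := by
  field_simp
  ring

end Exponent

theorem stmt1_general {d : ℕ} {D u : EuclideanSpace ℝ (Fin d) → ℝ}
    {x : EuclideanSpace ℝ (Fin d)} (hu : ∀ᶠ y in 𝓝 x, DifferentiableAt ℝ u y)
    (hflux : ∀ i, DifferentiableAt ℝ (flux D u i) x) (hpos : 0 < u x)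
    {σa σf : ℝ} (hdiff : -divA D u x + (σa + σf) * u x = 0)
    {γ βa βf : ℝ} (hβf : βf ≠ 0) (hsum : βf + γ ≠ 0)
    {Q : ℝ} (hQ : Q = γ * D x * gradSq u x + (βa * σa + βf * σf) * u x ^ 2)
    {θ μ : ℝ} (hθ : θ = (βf - γ) / (βf + γ)) (hμ : μ = βa / βf - 1) :
    divA D (fun y => u y ^ (2 / (1 + θ))) x =
      -(2 / (1 + θ)) * σa * μ * u x ^ (2 / (1 + θ)) +
        2 / (1 + θ) * Q / βf * (u x ^ (2 / (1 + θ))) ^ (-θ) := by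
  have hexp : 2 / (1 + θ) = 1 + γ / βf := hθ ▸ two_div_one_add_sub_div_add hβf hsum
  have hθ_ne : 1 + θ ≠ 0 := by
    rw [hθ, one_add_sub_div_add hsum]
    exact div_ne_zero (mul_ne_zero two_ne_zero hβf) hsum
  have hpow_neg : (u x ^ (2 / (1 + θ))) ^ (-θ) = u x ^ (2 / (1 + θ) - 2) := by
    rw [← Real.rpow_mul hpos.le, two_div_one_add_mul_neg hθ_ne]
  generalize 2 / (1 + θ) = p at *
  have hpow : u x ^ p = u x ^ (p - 2) * u x ^ 2 := by
    rw [← Real.rpow_add_natCast hpos.ne']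
    norm_num
  have hdata : (σa + σf) * u x ^ 2 + (p - 1) * D x * gradSq u x =
      Q / βf - μ * σa * u x ^ 2 := by
    rw [hexp, hQ, hμ]
    field_simp
    ring
  calc divA D (fun y => u y ^ p) x
      = p * u x ^ (p - 2) * ((σa + σf) * u x ^ 2 + (p - 1) * D x * gradSq u x) :=
        divA_rpow_of_divA_eq_mul hu hflux hpos.ne' (by linarith) p
    _ = p * u x ^ (p - 2) * (Q / βf - μ * σa * u x ^ 2) := by rw [hdata]
    _ = -p * σa * μ * u x ^ p + p * Q / βf * (u x ^ p) ^ (-θ) := by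
        rw [hpow_neg, hpow]
        ring

theorem stmt1 {d : ℕ} (hd : 1 ≤ d) (Ω : Set (EuclideanSpace ℝ (Fin d)))
    (hΩ : IsOpen Ω) (Dx σxa σxf u₀ : EuclideanSpace ℝ (Fin d) → ℝ)
    (hD : ContDiffOn ℝ 1 Dx Ω) (hu : ContDiffOn ℝ 2 u₀ Ω)
    (hupos : ∀ x ∈ Ω, 0 < u₀ x)
    (hdiff : ∀ x ∈ Ω, -divA Dx u₀ x + (σxa x + σxf x) * u₀ x = 0)
    (γx βx βf : ℝ) (hβf : βf ≠ 0) (hsum : βf + γx ≠ 0)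
    (Q : EuclideanSpace ℝ (Fin d) → ℝ)
    (hQ : ∀ x, Q x = γx * Dx x * gradSq u₀ x
        + (βx * σxa x + βf * σxf x) * (u₀ x) ^ 2)
    (θ μ : ℝ) (hθ : θ = (βf - γx) / (βf + γx)) (hμ : μ = βx / βf - 1)
    (b c : EuclideanSpace ℝ (Fin d) → ℝ)
    (hb : ∀ x, b x = -(2 / (1 + θ)) * σxa x * μ)
    (hc : ∀ x, c x = (2 / (1 + θ)) * Q x / βf) :
    ∀ x ∈ Ω,
      divA Dx (fun y => u₀ y ^ (2 / (1 + θ))) x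
        = b x * u₀ x ^ (2 / (1 + θ)) + c x * (u₀ x ^ (2 / (1 + θ))) ^ (-θ) := by
  intro x hx
  have hΩx : Ω ∈ 𝓝 x := hΩ.mem_nhds hx
  have hflux : ∀ i, DifferentiableAt ℝ (flux Dx u₀ i) x :=
    differentiableAt_flux ((hD.contDiffAt hΩx).differentiableAt one_ne_zero)
      (differentiableAt_fderiv_of_contDiffAt_two (hu.contDiffAt hΩx))
  rw [hb, hc]
  exact stmt1_general ((hu.differentiableOn two_ne_zero).eventually_differentiableAt hΩx) hflux
    (hupos x hx) (hdiff x hx) hβf hsum (hQ x) hθ hμ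
end

section
/- Assume θ < 0 with θ ≠ -1, and b ≥ 0, c ≥ 0 on Ω. Let u, v ∈ C²(Ω) ∩ C¹(cl(Ω)) satisfy ∇·(a∇u) ≤ b·u + c·s_θ(u) pointwise in Ω (u is a supersolution of (★)) and ∇·(a∇v) ≥ b·v + c·s_θ(v) pointwise in Ω (v is a subsolution of (★)), and suppose u ≥ v on ∂Ω. Then u ≥ v everywhere in Ω. -/
/-!
Where `v > u`, monotonicity of the nonlinearity gives `∇·(a∇(v - u)) ≥ 0`, so the claim is a weak
maximum principle for `w = v - u`. If `w x₀ > 0` at some point, the superlevel set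
`K = {w ≥ w x₀ / 2}` is a compact subset of `Ω`, on which `a` is bounded below and `∇a` is bounded;
hence `φ y = exp (l y₀)` satisfies `∇·(a∇φ) > 0` on `K` once `l` is large. For small `ε > 0` the
maximum of `w + ε φ` over `cl(Ω)` is attained in `K`, where `∇·(a∇(w + ε φ)) > 0`, against the
second-derivative test.
-/

open Real Set MeasureTheory Filter Topology

/-- `s_θ(z) = sign(z)·|z|^{-θ}`, so `s_θ(z) = z^{-θ}` for `z > 0` and `s_θ(0) = 0`. -/
noncomputable def sTheta (θ z : ℝ) : ℝ := Real.sign z * |z| ^ (-θ)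

theorem sTheta_neg (θ z : ℝ) : sTheta θ (-z) = -sTheta θ z := by
  simp only [sTheta, Real.sign_neg, abs_neg, neg_mul]

theorem monotone_sTheta {θ : ℝ} (hθ : θ ≤ 0) : Monotone (sTheta θ) := by
  refine monotone_of_odd_of_monotoneOn_nonneg (sTheta_neg θ) fun z hz w _ hzw => ?_
  rcases hzw.eq_or_lt with rfl | hlt
  · exact le_rfl
  have hw_pos : 0 < w := (mem_Ici.1 hz).trans_lt hlt
  rcases (mem_Ici.1 hz).eq_or_lt with rfl | hz_pos
  · simpa only [sTheta, Real.sign_zero, zero_mul, Real.sign_of_pos hw_pos, one_mul] using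
      rpow_nonneg (abs_nonneg w) _
  · simpa only [sTheta, Real.sign_of_pos hz_pos, Real.sign_of_pos hw_pos, abs_of_pos hz_pos,
      abs_of_pos hw_pos, one_mul] using rpow_le_rpow hz_pos.le hzw (neg_nonneg.2 hθ)

-- A positive second derivative would make `t` a local minimum too, and `g` locally constant.
theorem deriv_deriv_nonpos_of_isLocalMax {g : ℝ → ℝ} {t : ℝ} (hg : ContinuousAt g t)
    (hmax : IsLocalMax g t) : deriv (deriv g) t ≤ 0 := by
  by_contra! hpos
  have hmin : IsLocalMin g t := isLocalMin_of_deriv_deriv_pos hpos hmax.deriv_eq_zero hg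
  have hconst : g =ᶠ[𝓝 t] fun _ => g t := by
    filter_upwards [hmax, hmin] with s hle hge using le_antisymm hle hge
  have hzero : deriv (deriv g) t = 0 := by simp [hconst.deriv.deriv_eq]
  exact hpos.ne' hzero

theorem exists_pos_isMaxOn_add_smul {X : Type*} [TopologicalSpace X] {S : Set X} {w φ : X → ℝ}
    {x₀ : X} {δ : ℝ} (hS : IsCompact S) (hw : ContinuousOn w S) (hφ : ContinuousOn φ S)
    (hx₀ : x₀ ∈ S) (hδ : δ < w x₀) :
    ∃ ε : ℝ, 0 < ε ∧ ∃ x ∈ S, δ ≤ w x ∧ IsMaxOn (w + ε • φ) S x := by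
  obtain ⟨B, hB⟩ := hS.exists_bound_of_continuousOn hφ
  have hB_nonneg : 0 ≤ B := (norm_nonneg _).trans (hB x₀ hx₀)
  set ε : ℝ := (w x₀ - δ) / (2 * B + 1)
  have hε : 0 < ε := div_pos (sub_pos.2 hδ) (by positivity)
  have hεB : ε * (2 * B + 1) = w x₀ - δ := div_mul_cancel₀ _ (by positivity)
  obtain ⟨x, hx, hmax⟩ := hS.exists_isMaxOn ⟨x₀, hx₀⟩ (hw.add (hφ.const_smul ε))
  refine ⟨ε, hε, x, hx, ?_, hmax⟩
  have hle : w x₀ + ε * φ x₀ ≤ w x + ε * φ x := hmax hx₀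
  have hosc : φ x - φ x₀ ≤ 2 * B := by
    linarith [(abs_le.1 (hB x hx)).2, (abs_le.1 (hB x₀ hx₀)).1]
  linarith [mul_le_mul_of_nonneg_left hosc hε.le]

section NormedSpace

variable {E F : Type*} [NormedAddCommGroup E] [NormedSpace ℝ E] [NormedAddCommGroup F]
  [NormedSpace ℝ F] {x : E}

theorem eventually_differentiableAt_of_contDiffAt {f : E → F} (hf : ContDiffAt ℝ 1 f x) :
    ∀ᶠ y in 𝓝 x, DifferentiableAt ℝ f y :=
  (hf.eventually (by simp)).mono fun _ hy => hy.differentiableAt one_ne_zero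

theorem differentiableAt_fderiv_apply {f : E → F} (hf : ContDiffAt ℝ 2 f x) (e : E) :
    DifferentiableAt ℝ (fun y => fderiv ℝ f y e) x :=
  ((hf.fderiv_right (m := 1) (by norm_num)).differentiableAt one_ne_zero).clm_apply
    (differentiableAt_const e)

theorem fderiv_add_smul_apply {f g : E → F} (hf : DifferentiableAt ℝ f x)
    (hg : DifferentiableAt ℝ g x) (ε : ℝ) (e : E) :
    fderiv ℝ (f + ε • g) x e = fderiv ℝ f x e + ε • fderiv ℝ g x e := by
  simp [fderiv_add hf (hg.const_smul ε), fderiv_const_smul hg]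

theorem fderiv_fderiv_add_smul_apply {f g : E → F} (hf : ContDiffAt ℝ 2 f x)
    (hg : ContDiffAt ℝ 2 g x) (ε : ℝ) (e : E) :
    fderiv ℝ (fun y => fderiv ℝ (f + ε • g) y e) x e =
      fderiv ℝ (fun y => fderiv ℝ f y e) x e + ε • fderiv ℝ (fun y => fderiv ℝ g y e) x e := by
  have hfirst : (fun y => fderiv ℝ (f + ε • g) y e) =ᶠ[𝓝 x]
      (fun y => fderiv ℝ f y e) + ε • fun y => fderiv ℝ g y e := by
    filter_upwards [eventually_differentiableAt_of_contDiffAt (hf.of_le one_le_two),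
      eventually_differentiableAt_of_contDiffAt (hg.of_le one_le_two)] with y hfy hgy
    exact fderiv_add_smul_apply hfy hgy ε e
  rw [hfirst.fderiv_eq]
  exact fderiv_add_smul_apply (differentiableAt_fderiv_apply hf e)
    (differentiableAt_fderiv_apply hg e) ε e

theorem fderiv_fderiv_apply_nonpos_of_isLocalMax {f : E → ℝ} (hf : ContDiffAt ℝ 2 f x)
    (hmax : IsLocalMax f x) (e : E) : fderiv ℝ (fun y => fderiv ℝ f y e) x e ≤ 0 := by
  set line : ℝ → E := fun t => x + t • e
  have hline (t : ℝ) : HasDerivAt line e t := by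
    simpa [line] using ((hasDerivAt_id t).smul_const e).const_add x
  have hline_zero : line 0 = x := by simp [line]
  have htendsto : Tendsto line (𝓝 0) (𝓝 x) := hline_zero ▸ (hline 0).continuousAt.tendsto
  have hderiv : deriv (f ∘ line) =ᶠ[𝓝 0] (fun y => fderiv ℝ f y e) ∘ line := by
    filter_upwards [htendsto.eventually
      (eventually_differentiableAt_of_contDiffAt (hf.of_le one_le_two))] with t ht
    exact (ht.hasFDerivAt.comp_hasDerivAt t (hline t)).deriv
  have hderiv₂ : deriv (deriv (f ∘ line)) 0 = fderiv ℝ (fun y => fderiv ℝ f y e) x e := by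
    rw [hderiv.deriv_eq]
    exact ((differentiableAt_fderiv_apply hf e).hasFDerivAt.comp_hasDerivAt_of_eq 0 (hline 0)
      hline_zero.symm).deriv
  rw [← hderiv₂]
  rw [← hline_zero] at hf hmax
  exact deriv_deriv_nonpos_of_isLocalMax (hf.continuousAt.comp (hline 0).continuousAt)
    (hmax.comp_continuous (hline 0).continuousAt)

theorem fderiv_exp_clm_apply (L : E →L[ℝ] ℝ) (y e : E) :
    fderiv ℝ (fun y => Real.exp (L y)) y e = Real.exp (L y) * L e := by
  simp [L.hasFDerivAt.exp.fderiv]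

end NormedSpace

section DivergenceForm

variable {d : ℕ} {a f g w : EuclideanSpace ℝ (Fin d) → ℝ} {x : EuclideanSpace ℝ (Fin d)}
  {K Ω : Set (EuclideanSpace ℝ (Fin d))}

theorem divA_eq_sum (ha : DifferentiableAt ℝ a x) (hf : ContDiffAt ℝ 2 f x) :
    divA a f x = ∑ i : Fin d,
      (a x * fderiv ℝ (fun y => fderiv ℝ f y (EuclideanSpace.single i 1)) x
          (EuclideanSpace.single i 1) +
        fderiv ℝ f x (EuclideanSpace.single i 1) * fderiv ℝ a x (EuclideanSpace.single i 1)) := by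
  refine Finset.sum_congr rfl fun i _ => ?_
  simp [fderiv_fun_mul ha (differentiableAt_fderiv_apply hf _)]

theorem divA_nonpos_of_isLocalMax (ha : DifferentiableAt ℝ a x) (ha_nonneg : 0 ≤ a x)
    (hf : ContDiffAt ℝ 2 f x) (hmax : IsLocalMax f x) : divA a f x ≤ 0 := by
  simp only [divA_eq_sum ha hf, hmax.fderiv_eq_zero, zero_apply, zero_mul, add_zero]
  exact Finset.sum_nonpos fun i _ => mul_nonpos_of_nonneg_of_nonpos ha_nonneg
    (fderiv_fderiv_apply_nonpos_of_isLocalMax hf hmax _)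

theorem divA_add_smul (ha : DifferentiableAt ℝ a x) (hf : ContDiffAt ℝ 2 f x)
    (hg : ContDiffAt ℝ 2 g x) (ε : ℝ) :
    divA a (f + ε • g) x = divA a f x + ε * divA a g x := by
  have hfg : ContDiffAt ℝ 2 (f + ε • g) x := hf.add (hg.const_smul ε)
  rw [divA_eq_sum ha hf, divA_eq_sum ha hg, divA_eq_sum ha hfg,
    Finset.mul_sum, ← Finset.sum_add_distrib]
  refine Finset.sum_congr rfl fun i _ => ?_
  rw [fderiv_fderiv_add_smul_apply hf hg, fderiv_add_smul_apply (hf.differentiableAt two_ne_zero)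
    (hg.differentiableAt two_ne_zero), smul_eq_mul, smul_eq_mul]
  ring

theorem divA_exp_clm (ha : DifferentiableAt ℝ a x) (L : EuclideanSpace ℝ (Fin d) →L[ℝ] ℝ) :
    divA a (fun y => Real.exp (L y)) x = Real.exp (L x) * ∑ i : Fin d,
      (a x * L (EuclideanSpace.single i 1) ^ 2 +
        fderiv ℝ a x (EuclideanSpace.single i 1) * L (EuclideanSpace.single i 1)) := by
  rw [divA_eq_sum ha L.contDiff.exp.contDiffAt, Finset.mul_sum]
  refine Finset.sum_congr rfl fun i _ => ?_
  have hexp : DifferentiableAt ℝ (fun y => Real.exp (L y)) x := L.differentiableAt.exp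
  simp only [fderiv_exp_clm_apply, fderiv_mul_const hexp, smul_apply, smul_eq_mul]
  ring

theorem exists_contDiff_divA_pos (hd : 1 ≤ d) (hK : IsCompact K)
    (ha : ∀ x ∈ K, ContDiffAt ℝ 1 a x) (ha_pos : ∀ x ∈ K, 0 < a x) :
    ∃ φ, ContDiff ℝ 2 φ ∧ ∀ x ∈ K, 0 < divA a φ x := by
  let i : Fin d := ⟨0, hd⟩
  set e : EuclideanSpace ℝ (Fin d) := EuclideanSpace.single i 1
  have hratio : ContinuousOn (fun x => fderiv ℝ a x e / a x) K := fun x hx =>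
    ((((ha x hx).fderiv_right (m := 0) (by norm_num)).continuousAt.clm_apply
      continuousAt_const).div (ha x hx).continuousAt (ha_pos x hx).ne').continuousWithinAt
  obtain ⟨M, hM⟩ := hK.exists_bound_of_continuousOn hratio
  set l : ℝ := |M| + 1
  have hl : 0 < l := by positivity
  set L : EuclideanSpace ℝ (Fin d) →L[ℝ] ℝ := l • EuclideanSpace.proj i
  have hL_ne (j) (hj : j ≠ i) : L (EuclideanSpace.single j 1) = 0 := by simp [L, hj.symm]
  have hL_self : L e = l := by simp [L, e]
  refine ⟨fun y => Real.exp (L y), L.contDiff.exp, fun x hx => ?_⟩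
  have hfactor : 0 < a x * l + fderiv ℝ a x e := by
    have hlt : -l < fderiv ℝ a x e / a x := by
      linarith [(abs_le.1 (hM x hx)).1, le_abs_self M]
    linarith [(lt_div_iff₀ (ha_pos x hx)).1 hlt]
  rw [divA_exp_clm ((ha x hx).differentiableAt one_ne_zero),
    Finset.sum_eq_single i (fun j _ hj => by simp [hL_ne j hj]) (by simp), hL_self]
  have hsum : a x * l ^ 2 + fderiv ℝ a x e * l = l * (a x * l + fderiv ℝ a x e) := by ring
  rw [hsum]
  exact mul_pos (Real.exp_pos _) (mul_pos hl hfactor)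

theorem nonpos_of_divA_nonneg (hd : 1 ≤ d) (hΩo : IsOpen Ω) (hΩb : Bornology.IsBounded Ω)
    (ha : ContDiffOn ℝ 1 a Ω) (ha_pos : ∀ x ∈ Ω, 0 < a x) (hw : ContDiffOn ℝ 2 w Ω)
    (hwc : ContinuousOn w (closure Ω)) (hsub : ∀ x ∈ Ω, 0 < w x → 0 ≤ divA a w x)
    (hbdry : ∀ x ∈ frontier Ω, w x ≤ 0) : ∀ x ∈ Ω, w x ≤ 0 := by
  by_contra! ⟨x₀, hx₀, hx₀_pos⟩
  have hcompact : IsCompact (closure Ω) := hΩb.isCompact_closure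
  set K : Set (EuclideanSpace ℝ (Fin d)) := closure Ω ∩ w ⁻¹' Ici (w x₀ / 2)
  have hK : IsCompact K := hcompact.of_isClosed_subset
    (hwc.preimage_isClosed_of_isClosed isClosed_closure isClosed_Ici) inter_subset_left
  have hK_pos : ∀ x ∈ K, 0 < w x := fun x hx => (half_pos hx₀_pos).trans_le hx.2
  have hKΩ : K ⊆ Ω := by
    intro x hx
    by_contra hxΩ
    exact (hK_pos x hx).not_ge (hbdry x ⟨hx.1, by rwa [hΩo.interior_eq]⟩)
  have ha_at (x) (hx : x ∈ K) : ContDiffAt ℝ 1 a x := ha.contDiffAt (hΩo.mem_nhds (hKΩ hx))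
  obtain ⟨φ, hφ, hφ_pos⟩ :=
    exists_contDiff_divA_pos hd hK ha_at fun x hx => ha_pos x (hKΩ hx)
  obtain ⟨ε, hε, x, hx, hwx, hmax⟩ := exists_pos_isMaxOn_add_smul hcompact hwc
    hφ.continuous.continuousOn (subset_closure hx₀) (half_lt_self hx₀_pos)
  have hxK : x ∈ K := ⟨hx, hwx⟩
  have hΩx : Ω ∈ 𝓝 x := hΩo.mem_nhds (hKΩ hxK)
  have hwx₂ : ContDiffAt ℝ 2 w x := hw.contDiffAt hΩx
  have ha_diff : DifferentiableAt ℝ a x := (ha_at x hxK).differentiableAt one_ne_zero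
  have hle : divA a (w + ε • φ) x ≤ 0 :=
    divA_nonpos_of_isLocalMax ha_diff (ha_pos x (hKΩ hxK)).le
      (hwx₂.add (hφ.contDiffAt.const_smul ε))
      (hmax.isLocalMax (mem_of_superset hΩx subset_closure))
  rw [divA_add_smul ha_diff hwx₂ hφ.contDiffAt] at hle
  linarith [hsub x (hKΩ hxK) (hK_pos x hxK), mul_pos hε (hφ_pos x hxK)]

end DivergenceForm

theorem stmt3_general {d : ℕ} (hd : 1 ≤ d) {Ω : Set (EuclideanSpace ℝ (Fin d))}
    (hΩo : IsOpen Ω) (hΩb : Bornology.IsBounded Ω) {a u v : EuclideanSpace ℝ (Fin d) → ℝ}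
    (ha : ContDiffOn ℝ 1 a Ω) (ha_pos : ∀ x ∈ Ω, 0 < a x)
    {F : EuclideanSpace ℝ (Fin d) → ℝ → ℝ} (hF : ∀ x ∈ Ω, Monotone (F x))
    (hu : ContDiffOn ℝ 2 u Ω) (huc : ContinuousOn u (closure Ω))
    (hv : ContDiffOn ℝ 2 v Ω) (hvc : ContinuousOn v (closure Ω))
    (hsuper : ∀ x ∈ Ω, divA a u x ≤ F x (u x)) (hsub : ∀ x ∈ Ω, F x (v x) ≤ divA a v x)
    (hbdry : ∀ x ∈ frontier Ω, v x ≤ u x) : ∀ x ∈ Ω, v x ≤ u x := by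
  have hdiff : v - u = v + (-1 : ℝ) • u := by rw [neg_one_smul, sub_eq_add_neg]
  have hdivA (x) (hx : x ∈ Ω) (hpos : 0 < (v - u) x) : 0 ≤ divA a (v - u) x := by
    have hΩx : Ω ∈ 𝓝 x := hΩo.mem_nhds hx
    rw [hdiff, divA_add_smul ((ha.contDiffAt hΩx).differentiableAt one_ne_zero)
      (hv.contDiffAt hΩx) (hu.contDiffAt hΩx)]
    linarith [hsuper x hx, hsub x hx, hF x hx (sub_pos.1 hpos).le]
  exact fun x hx => sub_nonpos.1 <| nonpos_of_divA_nonneg hd hΩo hΩb ha ha_pos (hv.sub hu)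
    (hvc.sub huc) hdivA (fun y hy => sub_nonpos.2 (hbdry y hy)) x hx

theorem stmt3 {d : ℕ} (hd : 1 ≤ d) (Ω U : Set (EuclideanSpace ℝ (Fin d)))
    (hΩo : IsOpen Ω) (hΩb : Bornology.IsBounded Ω)
    (hU : IsOpen U) (hUΩ : closure Ω ⊆ U)
    (a b c : EuclideanSpace ℝ (Fin d) → ℝ)
    (ha : ContDiffOn ℝ 1 a U) (a₀ : ℝ) (ha₀ : 0 < a₀) (halb : ∀ x ∈ Ω, a₀ ≤ a x)
    (hbcont : ContinuousOn b (closure Ω)) (hccont : ContinuousOn c (closure Ω))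
    (θ : ℝ) (hθneg : θ < 0) (hθne : θ ≠ -1)
    (hbnn : ∀ x ∈ Ω, 0 ≤ b x) (hcnn : ∀ x ∈ Ω, 0 ≤ c x)
    (u v : EuclideanSpace ℝ (Fin d) → ℝ)
    (hu2 : ContDiffOn ℝ 2 u Ω) (hu1 : ContDiffOn ℝ 1 u (closure Ω))
    (hv2 : ContDiffOn ℝ 2 v Ω) (hv1 : ContDiffOn ℝ 1 v (closure Ω))
    (hsuper : ∀ x ∈ Ω, divA a u x ≤ b x * u x + c x * sTheta θ (u x))
    (hsub : ∀ x ∈ Ω, b x * v x + c x * sTheta θ (v x) ≤ divA a v x)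
    (hbdry : ∀ x ∈ frontier Ω, v x ≤ u x) :
    ∀ x ∈ Ω, v x ≤ u x := by
  exact stmt3_general hd hΩo hΩb (ha.mono (subset_closure.trans hUΩ))
    (fun x hx => ha₀.trans_le (halb x hx)) (F := fun x z => b x * z + c x * sTheta θ z)
    (fun x hx => (monotone_id.const_mul (hbnn x hx)).add
      ((monotone_sTheta hθneg.le).const_mul (hcnn x hx)))
    hu2 hu1.continuousOn hv2 hv1.continuousOn hsuper hsub hbdry
end

section
/- Let d ≥ 1 and -1 < θ < 0. Let Ω ⊂ ℝ^d be a bounded open set and suppose there are constants 0 < l₀ < l₁ with l₀ ≤ |x| ≤ l₁ for all x ∈ cl(Ω). Let a be C¹ on an open neighborhood of cl(Ω) with a₀ ≤ a ≤ A₁ and |∇a| ≤ A₂ on cl(Ω) for constants 0 < a₀ ≤ A₁ and A₂ ≥ 0, and let b, c be continuous on cl(Ω) with 0 ≤ b ≤ B and 0 ≤ c ≤ C₀ for constants B, C₀ ≥ 0. Then there exist constants κ > 0 and m > 0 such that the function Ψ̲(x) := κ|x|^{2m} satisfies ∇·(a∇Ψ̲) > b·Ψ̲ + c·Ψ̲^{-θ}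 at every point of Ω; that is, Ψ̲ is a strict classical subsolution of the semilinear equation. -/
open Real Set MeasureTheory Filter Topology

/-!
The product rule `∇·(a∇u) = ∇a·∇u + aΔu`, applied to `u = |x|^p` with `p = 2m`, gives
`∇·(a∇u) = p|x|^{p-2} (∇a·x + a(p + d - 2))`. Normalising `Ψ = κ|x|^p` so that `Ψ ≥ 1` where
`|x| ≥ l₀` makes the sublinear term harmless: `Ψ^{-θ} ≤ Ψ` since `-θ ≤ 1`. What remains is the
linear inequality `(b + c)|x|² < p(∇a·x + a(p + d - 2))`, whose left side is bounded while its
right side grows quadratically in `p`.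
-/

open InnerProductSpace Laplacian
open scoped Gradient RealInnerProductSpace

theorem rpow_sub_two_mul_sq {r : ℝ} (hr : r ≠ 0) (q : ℝ) : r ^ (q - 2) * r ^ 2 = r ^ q := by
  rw [← Real.rpow_add_natCast hr, Nat.cast_ofNat, sub_add_cancel]

section NormRpow

variable {E : Type*} [NormedAddCommGroup E] [InnerProductSpace ℝ E] {x : E}

theorem hasFDerivAt_norm_rpow_of_ne_zero (hx : x ≠ 0) (p : ℝ) :
    HasFDerivAt (fun y : E => ‖y‖ ^ p) ((p * ‖x‖ ^ (p - 2)) • innerSL ℝ x) x := by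
  have h := ((hasStrictFDerivAt_norm_sq x).rpow_const (p := p / 2) (by simp [hx])).hasFDerivAt
  simp_rw [← Real.rpow_natCast_mul (norm_nonneg _), ← Nat.cast_smul_eq_nsmul ℝ, smul_smul] at h
  convert! h using 2 <;> ring_nf

theorem fderiv_norm_rpow_eventuallyEq (hx : x ≠ 0) (p : ℝ) :
    fderiv ℝ (fun y : E => ‖y‖ ^ p) =ᶠ[𝓝 x] fun y => (p * ‖y‖ ^ (p - 2)) • innerSL ℝ y := by
  filter_upwards [isOpen_ne.mem_nhds hx] with y hy
  exact (hasFDerivAt_norm_rpow_of_ne_zero hy p).fderiv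

theorem differentiableAt_fderiv_norm_rpow (hx : x ≠ 0) (p : ℝ) :
    DifferentiableAt ℝ (fderiv ℝ fun y : E => ‖y‖ ^ p) x :=
  (((hasFDerivAt_norm_rpow_of_ne_zero hx (p - 2)).differentiableAt.const_mul p).smul
    (innerSL ℝ).differentiableAt).congr_of_eventuallyEq (fderiv_norm_rpow_eventuallyEq hx p)

theorem fderiv_fderiv_norm_rpow_apply (hx : x ≠ 0) (p : ℝ) (v w : E) :
    fderiv ℝ (fderiv ℝ fun y : E => ‖y‖ ^ p) x v w =
      p * (‖x‖ ^ (p - 2) * ⟪v, w⟫ + (p - 2) * ‖x‖ ^ (p - 2 - 2) * (⟪x, v⟫ * ⟪x, w⟫)) := by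
  -- `innerSL` is conjugate-linear in its first argument; over `ℝ` it is linear definitionally.
  have hinner : ∀ v w : E, (innerSL ℝ : E →L[ℝ] E →L[ℝ] ℝ) v w = ⟪v, w⟫ := fun _ _ => rfl
  have h : HasFDerivAt (fun y : E => (p * ‖y‖ ^ (p - 2)) • innerSL ℝ y) _ x :=
    ((hasFDerivAt_norm_rpow_of_ne_zero hx (p - 2)).const_mul p).smul
      (innerSL ℝ : E →L[ℝ] E →L[ℝ] ℝ).hasFDerivAt
  rw [(fderiv_norm_rpow_eventuallyEq hx p).fderiv_eq, h.fderiv]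
  simp only [add_apply, smul_apply, ContinuousLinearMap.smulRight_apply, hinner, smul_eq_mul]
  ring

variable [FiniteDimensional ℝ E]

theorem laplacian_norm_rpow (hx : x ≠ 0) (p : ℝ) :
    Δ (fun y : E => ‖y‖ ^ p) x = p * (p + Module.finrank ℝ E - 2) * ‖x‖ ^ (p - 2) := by
  let e := stdOrthonormalBasis ℝ E
  calc Δ (fun y : E => ‖y‖ ^ p) x
      = ∑ i, p * (‖x‖ ^ (p - 2) + (p - 2) * ‖x‖ ^ (p - 2 - 2) * ⟪x, e i⟫ ^ 2) := by
        simp [laplacian_eq_iteratedFDeriv_orthonormalBasis _ e, iteratedFDeriv_two_apply,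
          fderiv_fderiv_norm_rpow_apply hx, sq]
    _ = p * (Module.finrank ℝ E * ‖x‖ ^ (p - 2)
          + (p - 2) * (‖x‖ ^ (p - 2 - 2) * ∑ i, ⟪x, e i⟫ ^ 2)) := by
        simp [← Finset.mul_sum, Finset.sum_add_distrib, mul_assoc]
    _ = p * (p + Module.finrank ℝ E - 2) * ‖x‖ ^ (p - 2) := by
        rw [e.sum_sq_inner_left, rpow_sub_two_mul_sq (norm_ne_zero_iff.mpr hx)]
        ring

end NormRpow

section DivA

variable {d : ℕ} {a u : EuclideanSpace ℝ (Fin d) → ℝ} {x : EuclideanSpace ℝ (Fin d)}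

theorem divA_eq_inner_gradient_add_mul_laplacian (ha : DifferentiableAt ℝ a x)
    (hu : DifferentiableAt ℝ (fderiv ℝ u) x) :
    divA a u x = ⟪∇ a x, ∇ u x⟫ + a x * Δ u x := by
  let e := EuclideanSpace.basisFun (Fin d) ℝ
  have hterm : ∀ i, fderiv ℝ (fun y => a y * fderiv ℝ u y (e i)) x (e i) =
      ⟪∇ a x, e i⟫ * ⟪e i, ∇ u x⟫ + a x * fderiv ℝ (fderiv ℝ u) x (e i) (e i) := fun i => by
    rw [fderiv_fun_mul ha (hu.clm_apply (differentiableAt_const _)),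
      fderiv_clm_apply hu (differentiableAt_const _)]
    simp only [fderiv_fun_const, Pi.zero_apply, ContinuousLinearMap.comp_zero, zero_add, add_apply,
      smul_apply, ContinuousLinearMap.flip_apply, smul_eq_mul, inner_gradient_left,
      inner_gradient_right, ringHom_apply]
    ring
  calc divA a u x
      = ∑ i, fderiv ℝ (fun y => a y * fderiv ℝ u y (e i)) x (e i) := by simp [divA, e]
    _ = ⟪∇ a x, ∇ u x⟫ + a x * Δ u x := by
        rw [Finset.sum_congr rfl fun i _ => hterm i, Finset.sum_add_distrib,
          e.sum_inner_mul_inner, ← Finset.mul_sum,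
          laplacian_eq_iteratedFDeriv_orthonormalBasis _ e]
        simp [iteratedFDeriv_two_apply]

theorem divA_const_mul (κ : ℝ) : divA a (fun y => κ * u y) x = κ * divA a u x := by
  have hgrad : fderiv ℝ (fun y => κ * u y) = κ • fderiv ℝ u := fderiv_const_smul_field κ
  have hflux : ∀ v, fderiv ℝ (fun y => a y * (κ * fderiv ℝ u y v)) x =
      κ • fderiv ℝ (fun y => a y * fderiv ℝ u y v) x := fun v => by
    simp_rw [mul_left_comm (a _) κ]
    exact congrFun (fderiv_const_smul_field κ) x
  simp [divA, hgrad, hflux, Finset.mul_sum]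

theorem divA_norm_rpow (hx : x ≠ 0) (ha : DifferentiableAt ℝ a x) (p : ℝ) :
    divA a (fun y => ‖y‖ ^ p) x =
      ‖x‖ ^ (p - 2) * (p * (fderiv ℝ a x x + a x * (p + d - 2))) := by
  have hgrad : ⟪∇ a x, ∇ (fun y : EuclideanSpace ℝ (Fin d) => ‖y‖ ^ p) x⟫ =
      p * ‖x‖ ^ (p - 2) * fderiv ℝ a x x := by
    rw [real_inner_comm, inner_gradient_left, (hasFDerivAt_norm_rpow_of_ne_zero hx p).fderiv]
    simp
  rw [divA_eq_inner_gradient_add_mul_laplacian ha (differentiableAt_fderiv_norm_rpow hx p), hgrad,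
    laplacian_norm_rpow hx, finrank_euclideanSpace_fin]
  ring

theorem mul_norm_rpow_lt_divA_iff (hx : x ≠ 0) (ha : DifferentiableAt ℝ a x) (p V : ℝ) :
    V * ‖x‖ ^ p < divA a (fun y => ‖y‖ ^ p) x ↔
      V * ‖x‖ ^ 2 < p * (fderiv ℝ a x x + a x * (p + d - 2)) := by
  rw [divA_norm_rpow hx ha, ← rpow_sub_two_mul_sq (norm_ne_zero_iff.mpr hx) p, mul_left_comm,
    mul_lt_mul_iff_right₀ (Real.rpow_pos_of_pos (norm_pos_iff.mpr hx) _)]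

end DivA

theorem mul_add_mul_rpow_neg_le {θ c t : ℝ} (b : ℝ) (hθ : -1 ≤ θ) (hc : 0 ≤ c) (ht : 1 ≤ t) :
    b * t + c * t ^ (-θ) ≤ (b + c) * t := by
  rw [add_mul]
  gcongr
  exact Real.rpow_le_self_of_one_le ht (by linarith)

theorem one_le_inv_rpow_mul_rpow {l r p : ℝ} (hl : 0 < l) (hr : l ≤ r) (hp : 0 ≤ p) :
    1 ≤ (l ^ p)⁻¹ * r ^ p := by
  rw [inv_mul_eq_div, one_le_div (Real.rpow_pos_of_pos hl p)]
  exact Real.rpow_le_rpow hl.le hr hp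

theorem neg_mul_le_apply_of_norm_le {E : Type*} [SeminormedAddCommGroup E] [NormedSpace ℝ E]
    {f : E →L[ℝ] ℝ} {x : E} {A r : ℝ} (hf : ‖f‖ ≤ A) (hx : ‖x‖ ≤ r) : -(A * r) ≤ f x :=
  (abs_le.mp (f.le_of_opNorm_le_of_le hf hx)).1

theorem lt_mul_add_mul_add_sub_two {S K a₀ p g α δ : ℝ} (hS : 0 ≤ S) (hp : 2 ≤ p) (hδ : 0 ≤ δ)
    (hα₀ : 0 ≤ α) (hα : a₀ ≤ α) (hg : -K ≤ g) (hlarge : K + S < a₀ * (p - 2)) :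
    S < p * (g + α * (p + δ - 2)) := by
  have hgap : S < g + α * (p + δ - 2) :=
    calc S < -K + a₀ * (p - 2) := by linarith
      _ ≤ g + α * (p + δ - 2) := by gcongr; linarith
  exact hgap.trans_le (le_mul_of_one_le_left (hS.trans hgap.le) (by linarith))

theorem stmt6_general {d : ℕ} {s : Set (EuclideanSpace ℝ (Fin d))} {θ l₀ l₁ a₀ A M : ℝ}
    {a b c : EuclideanSpace ℝ (Fin d) → ℝ} (hθ : -1 ≤ θ) (hl₀ : 0 < l₀)
    (hnorm : ∀ x ∈ s, l₀ ≤ ‖x‖ ∧ ‖x‖ ≤ l₁)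
    (ha : ∀ x ∈ s, DifferentiableAt ℝ a x) (ha₀ : 0 < a₀) (halb : ∀ x ∈ s, a₀ ≤ a x)
    (hagrad : ∀ x ∈ s, ‖fderiv ℝ a x‖ ≤ A)
    (hc : ∀ x ∈ s, 0 ≤ c x) (hbc : ∀ x ∈ s, b x + c x ≤ M) :
    ∃ κ m : ℝ, 0 < κ ∧ 0 < m ∧
      ∀ x ∈ s,
        b x * (κ * ‖x‖ ^ (2 * m)) + c x * (κ * ‖x‖ ^ (2 * m)) ^ (-θ)
          < divA a (fun y => κ * ‖y‖ ^ (2 * m)) x := by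
  obtain ⟨m, hm⟩ := exists_gt (max 1 ((A * l₁ + |M| * l₁ ^ 2) / (2 * a₀) + 1))
  obtain ⟨hm₁, hm₂⟩ := max_lt_iff.mp hm
  have hlarge : A * l₁ + |M| * l₁ ^ 2 < a₀ * (2 * m - 2) := by
    rw [← lt_sub_iff_add_lt, div_lt_iff₀ (by positivity)] at hm₂
    linarith
  refine ⟨(l₀ ^ (2 * m))⁻¹, m, by positivity, by linarith, fun x hx => ?_⟩
  obtain ⟨hxl, hxu⟩ := hnorm x hx
  have hx₀ : x ≠ 0 := norm_pos_iff.mp (hl₀.trans_le hxl)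
  have hpotential : (b x + c x) * ‖x‖ ^ 2 ≤ |M| * l₁ ^ 2 := by
    gcongr
    exact (hbc x hx).trans (le_abs_self M)
  have hlinear : (b x + c x) * ‖x‖ ^ (2 * m) < divA a (fun y => ‖y‖ ^ (2 * m)) x :=
    (mul_norm_rpow_lt_divA_iff hx₀ (ha x hx) _ _).mpr <| hpotential.trans_lt <|
      lt_mul_add_mul_add_sub_two (by positivity) (by linarith) d.cast_nonneg
        (ha₀.le.trans (halb x hx)) (halb x hx)
        (neg_mul_le_apply_of_norm_le (hagrad x hx) hxu) hlarge
  calc _ ≤ (b x + c x) * ((l₀ ^ (2 * m))⁻¹ * ‖x‖ ^ (2 * m)) :=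
        mul_add_mul_rpow_neg_le _ hθ (hc x hx) (one_le_inv_rpow_mul_rpow hl₀ hxl (by linarith))
    _ = (l₀ ^ (2 * m))⁻¹ * ((b x + c x) * ‖x‖ ^ (2 * m)) := mul_left_comm _ _ _
    _ < (l₀ ^ (2 * m))⁻¹ * divA a (fun y => ‖y‖ ^ (2 * m)) x := by gcongr
    _ = divA a (fun y => (l₀ ^ (2 * m))⁻¹ * ‖y‖ ^ (2 * m)) x := (divA_const_mul _).symm

theorem stmt6 {d : ℕ} (hd : 1 ≤ d) (Ω U : Set (EuclideanSpace ℝ (Fin d)))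
    (hΩo : IsOpen Ω) (hΩb : Bornology.IsBounded Ω)
    (θ : ℝ) (hθ₁ : -1 < θ) (hθ₂ : θ < 0)
    (l₀ l₁ : ℝ) (hl₀ : 0 < l₀) (hl : l₀ < l₁)
    (hnorm : ∀ x ∈ closure Ω, l₀ ≤ ‖x‖ ∧ ‖x‖ ≤ l₁)
    (hU : IsOpen U) (hUΩ : closure Ω ⊆ U)
    (a b c : EuclideanSpace ℝ (Fin d) → ℝ)
    (ha : ContDiffOn ℝ 1 a U)
    (a₀ A₁ A₂ B C₀ : ℝ) (ha₀ : 0 < a₀) (haA : a₀ ≤ A₁) (hA₂ : 0 ≤ A₂)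
    (hB : 0 ≤ B) (hC₀ : 0 ≤ C₀)
    (halb : ∀ x ∈ closure Ω, a₀ ≤ a x) (haub : ∀ x ∈ closure Ω, a x ≤ A₁)
    (hagrad : ∀ x ∈ closure Ω, ‖fderiv ℝ a x‖ ≤ A₂)
    (hbcont : ContinuousOn b (closure Ω)) (hccont : ContinuousOn c (closure Ω))
    (hblb : ∀ x ∈ closure Ω, 0 ≤ b x) (hbub : ∀ x ∈ closure Ω, b x ≤ B)
    (hclb : ∀ x ∈ closure Ω, 0 ≤ c x) (hcub : ∀ x ∈ closure Ω, c x ≤ C₀) :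
    ∃ κ m : ℝ, 0 < κ ∧ 0 < m ∧
      ∀ x ∈ Ω,
        b x * (κ * ‖x‖ ^ (2 * m)) + c x * (κ * ‖x‖ ^ (2 * m)) ^ (-θ)
          < divA a (fun y => κ * ‖y‖ ^ (2 * m)) x := by
  obtain ⟨κ, m, hκ, hm, hsub⟩ := stmt6_general (s := closure Ω) hθ₁.le hl₀ hnorm
    (fun x hx => (ha.contDiffAt (hU.mem_nhds (hUΩ hx))).differentiableAt one_ne_zero)
    ha₀ halb hagrad hclb (fun x hx => add_le_add (hbub x hx) (hcub x hx))
  exact ⟨κ, m, hκ, hm, fun x hx => hsub x (subset_closure hx)⟩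
end
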